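/- Zero-variance property of gradient flows solving the Poisson equation (core of Proposition 3.1). Let V : ℝ^d → ℝ be twice continuously differentiable, let b := ∇V be its gradient field, and let ρ0, ρ1 : ℝ^d → ℝ be continuous nonnegative functions such that div b(y) = ρ1(y) − ρ0(y) for all y (i.e. ΔV = ρ1 − ρ0). Let X be a global flow of b with Jacobian factor J. Fix x ∈ ℝ^d and assume: (a) for k = 0, 1 the function t ↦ ρ_k(X t x) · J t x is Lebesgue integrable on ℝ; (b) J t x → 0 as t → +∞ and as t → −∞. Then ∫_ℝ ρ1(X t x) · J t x dt = ∫_ℝ ρ0(X t x) · J t x dt. Consequently, if moreover ρ0 = exp(−U0) with ∫_{ℝ^d} exp(−U0) = 1, ρ1 = exp(−U1)/Z1 with Z1 := ∫_{ℝ^d} exp(−U1) ∈ (0,∞), and ∫_ℝ ρ0(X t x) · J t x dt > 0, then the estimator value A(x) := (∫_ℝ exp(−U1(X t x)) J t x dt)/(∫_ℝ exp(−U0(X t x)) J t x dt) equals Z1. -/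

import Mathlib

/-!
Along an orbit `J' = div b(X) J`, which by the Poisson equation is `ρ1(X) J - ρ0(X) J`. Since `J`
has the same limit at both ends of the time line, this derivative integrates to zero over `ℝ`.
The orbit integral of an unnormalised density `Z * ρ1` is therefore `Z` times that of `ρ0`,
whatever the starting point.
-/

open MeasureTheory Filter

noncomputable section

/-- Euclidean state space ℝ^d. -/
abbrev Euc (d : ℕ) := EuclideanSpace ℝ (Fin d)

/-- Divergence of a vector field: trace of the Fréchet derivative. -/
def vdiv {d : ℕ} (b : Euc d → Euc d) (x : Euc d) : ℝ :=
  LinearMap.trace ℝ (Euc d) (fderiv ℝ b x).toLinearMap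

/-- A vector field is admissible if it is C¹ with globally bounded derivative. -/
def Admissible {d : ℕ} (b : Euc d → Euc d) : Prop :=
  ContDiff ℝ 1 b ∧ ∃ C : ℝ, ∀ x, ‖fderiv ℝ b x‖ ≤ C

/-- A global flow of the vector field `b`. -/
def IsGlobalFlow {d : ℕ} (b : Euc d → Euc d) (X : ℝ → Euc d → Euc d) : Prop :=
  (∀ x, X 0 x = x) ∧
  (∀ t s : ℝ, ∀ x, X (t + s) x = X t (X s x)) ∧
  (∀ x : Euc d, ∀ t : ℝ, HasDerivAt (fun τ => X τ x) (b (X t x)) t)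

/-- Jacobian factor of the flow: J t x = exp(∫₀ᵗ div b(X s x) ds). -/
def Jac {d : ℕ} (b : Euc d → Euc d) (X : ℝ → Euc d → Euc d) (t : ℝ) (x : Euc d) : ℝ :=
  Real.exp (∫ s in (0:ℝ)..t, vdiv b (X s x))

theorem contDiff_gradient {F : Type*} [NormedAddCommGroup F] [InnerProductSpace ℝ F]
    [CompleteSpace F] {f : F → ℝ} {m n : WithTop ℕ∞} (hf : ContDiff ℝ n f) (hmn : m + 1 ≤ n) :
    ContDiff ℝ m (gradient f) :=
  (InnerProductSpace.toDual ℝ F).symm.contDiff.comp (hf.fderiv_right hmn)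

theorem hasDerivAt_exp_intervalIntegral {g : ℝ → ℝ} (hg : Continuous g) (a t : ℝ) :
    HasDerivAt (fun u => Real.exp (∫ s in a..u, g s)) (g t * Real.exp (∫ s in a..t, g s)) t := by
  simpa only [mul_comm] using (hg.integral_hasStrictDerivAt a t).hasDerivAt.exp

theorem integral_eq_of_hasDerivAt_sub_of_tendsto {E : Type*} [NormedAddCommGroup E]
    [NormedSpace ℝ E] [CompleteSpace E] {F f g : ℝ → E} {m : E}
    (hF : ∀ t, HasDerivAt F (f t - g t) t) (hf : Integrable f) (hg : Integrable g)
    (hbot : Tendsto F atBot (nhds m)) (htop : Tendsto F atTop (nhds m)) :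
    ∫ t, f t = ∫ t, g t := by
  have hzero : ∫ t, (f t - g t) = m - m :=
    integral_of_hasDerivAt_of_tendsto hF (hf.sub hg) hbot htop
  rwa [integral_sub hf hg, sub_self, sub_eq_zero] at hzero

section Flow

variable {d : ℕ} {b : Euc d → Euc d} {X : ℝ → Euc d → Euc d}

theorem continuous_vdiv (hb : ContDiff ℝ 1 b) : Continuous (vdiv b) :=
  (LinearMap.continuous_of_finiteDimensional
    (LinearMap.trace ℝ (Euc d) ∘ₗ ContinuousLinearMap.coeLM ℝ)).comp
      (hb.continuous_fderiv one_ne_zero)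

theorem IsGlobalFlow.continuous_orbit (hX : IsGlobalFlow b X) (x : Euc d) :
    Continuous fun t => X t x :=
  continuous_iff_continuousAt.2 fun t => (hX.2.2 x t).continuousAt

theorem hasDerivAt_jac {x : Euc d} (hdiv : Continuous fun t => vdiv b (X t x)) (t : ℝ) :
    HasDerivAt (fun s => Jac b X s x) (vdiv b (X t x) * Jac b X t x) t :=
  hasDerivAt_exp_intervalIntegral hdiv 0 t

theorem integral_mul_jac_eq {ρ0 ρ1 : Euc d → ℝ} {x : Euc d}
    (hdiv : Continuous fun t => vdiv b (X t x))
    (hpoisson : ∀ t, vdiv b (X t x) = ρ1 (X t x) - ρ0 (X t x))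
    (hint0 : Integrable fun t => ρ0 (X t x) * Jac b X t x)
    (hint1 : Integrable fun t => ρ1 (X t x) * Jac b X t x)
    {m : ℝ} (hJtop : Tendsto (fun t => Jac b X t x) atTop (nhds m))
    (hJbot : Tendsto (fun t => Jac b X t x) atBot (nhds m)) :
    ∫ t, ρ1 (X t x) * Jac b X t x = ∫ t, ρ0 (X t x) * Jac b X t x := by
  refine integral_eq_of_hasDerivAt_sub_of_tendsto (fun t => ?_) hint1 hint0 hJbot hJtop
  rw [← sub_mul, ← hpoisson]
  exact hasDerivAt_jac hdiv t

theorem stmt_6_general (hb : ContDiff ℝ 1 b) {ρ0 ρ1 : Euc d → ℝ}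
    (hpoisson : ∀ y, vdiv b y = ρ1 y - ρ0 y) (hX : IsGlobalFlow b X) {x : Euc d}
    (hint0 : Integrable fun t => ρ0 (X t x) * Jac b X t x)
    (hint1 : Integrable fun t => ρ1 (X t x) * Jac b X t x)
    {m : ℝ} (hJtop : Tendsto (fun t => Jac b X t x) atTop (nhds m))
    (hJbot : Tendsto (fun t => Jac b X t x) atBot (nhds m)) :
    ∫ t, ρ1 (X t x) * Jac b X t x = ∫ t, ρ0 (X t x) * Jac b X t x ∧
    ∀ (q : Euc d → ℝ) (Z : ℝ), (∀ y, q y = Z * ρ1 y) →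
      ∫ t, ρ0 (X t x) * Jac b X t x ≠ 0 →
      (∫ t, q (X t x) * Jac b X t x) / (∫ t, ρ0 (X t x) * Jac b X t x) = Z := by
  have hdiv : Continuous fun t => vdiv b (X t x) :=
    (continuous_vdiv hb).comp (hX.continuous_orbit x)
  have heq := integral_mul_jac_eq hdiv (fun t => hpoisson (X t x)) hint0 hint1 hJtop hJbot
  refine ⟨heq, fun q Z hq hne => (div_eq_iff hne).2 ?_⟩
  simp only [hq, mul_assoc, integral_const_mul, heq]

end Flow

/-- Zero-variance property of gradient flows solving the Poisson equation
(core of Proposition 3.1). -/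
theorem stmt_6 {d : ℕ} (hd : 0 < d)
    (V : Euc d → ℝ) (hV : ContDiff ℝ 2 V)
    (ρ0 ρ1 : Euc d → ℝ) (hρ0c : Continuous ρ0) (hρ1c : Continuous ρ1)
    (hρ0n : ∀ y, 0 ≤ ρ0 y) (hρ1n : ∀ y, 0 ≤ ρ1 y)
    (hpoisson : ∀ y, vdiv (fun z => gradient V z) y = ρ1 y - ρ0 y)
    (X : ℝ → Euc d → Euc d) (hX : IsGlobalFlow (fun z => gradient V z) X)
    (x : Euc d)
    (hint : ∀ ρ : Euc d → ℝ, (ρ = ρ0 ∨ ρ = ρ1) →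
      Integrable (fun t : ℝ => ρ (X t x) * Jac (fun z => gradient V z) X t x))
    (hJtop : Tendsto (fun t : ℝ => Jac (fun z => gradient V z) X t x) atTop (nhds 0))
    (hJbot : Tendsto (fun t : ℝ => Jac (fun z => gradient V z) X t x) atBot (nhds 0)) :
    (∫ t : ℝ, ρ1 (X t x) * Jac (fun z => gradient V z) X t x) =
      (∫ t : ℝ, ρ0 (X t x) * Jac (fun z => gradient V z) X t x) ∧
    ∀ U0 U1 : Euc d → ℝ,
      ρ0 = (fun y => Real.exp (-(U0 y))) →
      (∫ y : Euc d, Real.exp (-(U0 y))) = 1 →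
      Integrable (fun y : Euc d => Real.exp (-(U1 y))) →
      0 < (∫ y : Euc d, Real.exp (-(U1 y))) →
      ρ1 = (fun y => Real.exp (-(U1 y)) / ∫ z : Euc d, Real.exp (-(U1 z))) →
      0 < (∫ t : ℝ, ρ0 (X t x) * Jac (fun z => gradient V z) X t x) →
      (∫ t : ℝ, Real.exp (-(U1 (X t x))) * Jac (fun z => gradient V z) X t x) /
          (∫ t : ℝ, Real.exp (-(U0 (X t x))) * Jac (fun z => gradient V z) X t x) =
        ∫ y : Euc d, Real.exp (-(U1 y)) := by
  obtain ⟨heq, hratio⟩ := stmt_6_general (contDiff_gradient hV one_add_one_eq_two.le) hpoisson hX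
    (hint ρ0 (.inl rfl)) (hint ρ1 (.inr rfl)) hJtop hJbot
  refine ⟨heq, fun U0 U1 hU0 _ _ hZ hU1 hpos => ?_⟩
  subst hU0
  exact hratio _ _ (fun y => by rw [hU1, mul_div_cancel₀ _ hZ.ne']) hpos.ne'
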